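/- arXiv:2111.12222 — 6 statements merged into one kernel-verified Lean document; each statement's English description precedes it below -/
import Mathlib

section
/- If δ_L > 0 and δ_R > 0, then the BCNF g is a homeomorphism of ℝ² onto itself; that is, g is a continuous bijection with continuous inverse. -/
/-!
The second coordinate `v` of `gB x` is `-δL * x.1` or `-δR * x.1`, so positivity of `δL` and `δR`
makes it nonnegative exactly when `x.1 ≤ 0`. The sign of `v` thus tells which affine piece was
applied, and each piece is invertible because its `δ` is nonzero. This gives the explicit inverse
`gBInv`. Both maps are continuous since their affine pieces agree on the switching lines `x.1 = 0`
and `v = 0`.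
-/

/-- The two-dimensional border-collision normal form (BCNF). -/
noncomputable def gB (τL δL τR δR : ℝ) (x : ℝ × ℝ) : ℝ × ℝ :=
  if x.1 ≤ 0 then (τL * x.1 + x.2 + 1, -δL * x.1)
  else (τR * x.1 + x.2 + 1, -δR * x.1)

/-- The inverse of the BCNF: the left affine piece is inverted on the closed upper half-plane, the
right one on the open lower half-plane. -/
noncomputable def gBInv (τL δL τR δR : ℝ) (y : ℝ × ℝ) : ℝ × ℝ :=
  if 0 ≤ y.2 then (-y.2 / δL, y.1 - 1 - τL * (-y.2 / δL))
  else (-y.2 / δR, y.1 - 1 - τR * (-y.2 / δR))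

theorem continuous_gB (τL δL τR δR : ℝ) : Continuous (gB τL δL τR δR) := by
  unfold gB
  refine Continuous.if_le (by fun_prop) (by fun_prop) (by fun_prop) (by fun_prop) ?_
  intro x hx
  simp [hx]

theorem continuous_gBInv (τL δL τR δR : ℝ) : Continuous (gBInv τL δL τR δR) := by
  unfold gBInv
  refine Continuous.if_le (by fun_prop) (by fun_prop) (by fun_prop) (by fun_prop) ?_
  intro y hy
  simp [← hy]

theorem gBInv_gB {τL δL τR δR : ℝ} (hδL : 0 < δL) (hδR : 0 < δR) (x : ℝ × ℝ) :
    gBInv τL δL τR δR (gB τL δL τR δR x) = x := by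
  obtain ⟨a, b⟩ := x
  by_cases h : a ≤ 0
  · have hv : 0 ≤ -δL * a := by nlinarith
    have ha : -(-δL * a) / δL = a := by field_simp
    simp only [gB, gBInv, if_pos h, if_pos hv, ha, Prod.mk.injEq, true_and]
    ring
  · have hv : ¬ 0 ≤ -δR * a := by
      push Not at h ⊢
      nlinarith
    have ha : -(-δR * a) / δR = a := by field_simp
    simp only [gB, gBInv, if_neg h, if_neg hv, ha, Prod.mk.injEq, true_and]
    ring

theorem gB_gBInv {τL δL τR δR : ℝ} (hδL : 0 < δL) (hδR : 0 < δR) (y : ℝ × ℝ) :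
    gB τL δL τR δR (gBInv τL δL τR δR y) = y := by
  obtain ⟨u, v⟩ := y
  by_cases h : 0 ≤ v
  · have ha : -v / δL ≤ 0 := div_nonpos_of_nonpos_of_nonneg (by linarith) hδL.le
    have hv : -δL * (-v / δL) = v := by field_simp
    simp only [gB, gBInv, if_pos h, if_pos ha, hv, Prod.mk.injEq, and_true]
    ring
  · have ha : ¬ -v / δR ≤ 0 := not_le.mpr (div_pos (by linarith) hδR)
    have hv : -δR * (-v / δR) = v := by field_simp
    simp only [gB, gBInv, if_neg h, if_neg ha, hv, Prod.mk.injEq, and_true]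
    ring

/-- If `δL > 0` and `δR > 0`, the BCNF is a homeomorphism of the plane. -/
theorem stmt1 (τL δL τR δR : ℝ) (hδL : 0 < δL) (hδR : 0 < δR) :
    ∃ H : (ℝ × ℝ) ≃ₜ (ℝ × ℝ), ∀ x, H x = gB τL δL τR δR x :=
  ⟨{ toFun := gB τL δL τR δR
     invFun := gBInv τL δL τR δR
     left_inv := gBInv_gB hδL hδR
     right_inv := gB_gBInv hδL hδR
     continuous_toFun := continuous_gB τL δL τR δR
     continuous_invFun := continuous_gBInv τL δL τR δR }, fun _ => rfl⟩
end

section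
/- Suppose δ_L > 0. If p* < ∞ then the sets D_p ∩ Φ_L, for p = 1, …, p*+1, are all non-empty and their union contains Φ_L. If p* = ∞ then D_p ∩ Φ_L ≠ ∅ for every p ≥ 1. -/
/-- The left component `g_L` of the BCNF. -/
def gLmap (τL δL : ℝ) (x : ℝ × ℝ) : ℝ × ℝ := (τL * x.1 + x.2 + 1, -δL * x.1)

/-- `χ_L(x) = p`: `p ≥ 1` is the smallest integer with `g^p(x) ∉ Π_L`. -/
def chiLeq (g : ℝ × ℝ → ℝ × ℝ) (p : ℕ) (x : ℝ × ℝ) : Prop :=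
  1 ≤ p ∧ 0 < (g^[p] x).1 ∧ ∀ i, 1 ≤ i → i < p → (g^[i] x).1 ≤ 0

/-- `D_p = {x ∈ Π_L : χ_L(x) = p}`. -/
def Dset (g : ℝ × ℝ → ℝ × ℝ) (p : ℕ) : Set (ℝ × ℝ) :=
  {x | x.1 ≤ 0 ∧ chiLeq g p x}

/-- The switching manifold `Σ`. -/
def SigmaSet : Set (ℝ × ℝ) := {x | x.1 = 0}

/-- The third quadrant `Φ_L`. -/
def PhiL : Set (ℝ × ℝ) := {x | x.1 < 0 ∧ x.2 ≤ 0}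


/-- The solution of `b (n+2) = τ b (n+1) - δ b n` with `b 0 = 0` and `b 1 = 1`; the first row of
`A_L ^ n` is `(b (n+1), b n)`. -/
def bseq (τ δ : ℝ) : ℕ → ℝ
  | 0 => 0
  | 1 => 1
  | n + 2 => τ * bseq τ δ (n + 1) - δ * bseq τ δ n

/-- The partial sums `b 1 + ⋯ + b n` of `bseq`. -/
def sseq (τ δ : ℝ) : ℕ → ℝ
  | 0 => 0
  | n + 1 => sseq τ δ n + bseq τ δ (n + 1)

theorem iterate_gLmap_fst (τ δ : ℝ) (n : ℕ) (x : ℝ × ℝ) :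
    ((gLmap τ δ)^[n] x).1 = bseq τ δ (n + 1) * x.1 + bseq τ δ n * x.2 + sseq τ δ n := by
  induction n generalizing x with
  | zero => simp [bseq, sseq]
  | succ n ih =>
    rw [Function.iterate_succ_apply, ih]
    simp only [gLmap, bseq, sseq]
    ring

theorem sseq_succ_succ (τ δ : ℝ) (n : ℕ) :
    sseq τ δ (n + 2) = 1 + τ * sseq τ δ (n + 1) - δ * sseq τ δ n := by
  induction n with
  | zero => simp [bseq, sseq]
  | succ n ih =>
    have h1 : sseq τ δ (n + 2) = sseq τ δ (n + 1) + bseq τ δ (n + 2) := rfl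
    have h2 : sseq τ δ (n + 1) = sseq τ δ n + bseq τ δ (n + 1) := rfl
    rw [sseq, bseq]
    linear_combination ih - τ * h1 + δ * h2

theorem sseq_nonneg {τ δ : ℝ} {q : ℕ} (hb : ∀ i, 1 ≤ i → i ≤ q → 0 < bseq τ δ i) :
    0 ≤ sseq τ δ q := by
  induction q with
  | zero => simp [sseq]
  | succ q ih =>
    rw [sseq]
    have := ih fun i h1 h2 => hb i h1 (by omega)
    have := hb (q + 1) (by omega) le_rfl
    linarith

/-- The defect `S (n+1) * b n - S n * b (n+1)` vanishes at `n = 0`, and its value at `n + 1` is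
`b (n+1)` plus `δ` times its value at `n`. -/
theorem cross_nonneg {τ δ : ℝ} (hδ : 0 < δ) {q : ℕ}
    (hb : ∀ i, 1 ≤ i → i ≤ q → 0 < bseq τ δ i) :
    0 ≤ sseq τ δ (q + 1) * bseq τ δ q - sseq τ δ q * bseq τ δ (q + 1) := by
  induction q with
  | zero => simp [bseq, sseq]
  | succ q ih =>
    have h1 := mul_nonneg hδ.le (ih fun i h1 h2 => hb i h1 (by omega))
    have h2 := hb (q + 1) (by omega) le_rfl
    rw [sseq_succ_succ, bseq]
    linarith

theorem cross_pos {τ δ : ℝ} (hδ : 0 < δ) {q : ℕ}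
    (hb : ∀ i, 1 ≤ i → i ≤ q + 1 → 0 < bseq τ δ i) :
    0 < sseq τ δ (q + 2) * bseq τ δ (q + 1) - sseq τ δ (q + 1) * bseq τ δ (q + 2) := by
  have h1 := mul_nonneg hδ.le (cross_nonneg (q := q) hδ fun i h1 h2 => hb i h1 (by omega))
  have h2 := hb (q + 1) (by omega) le_rfl
  rw [sseq_succ_succ, bseq]
  linarith

/-- For `q = 0` this holds because division by `b 0 = 0` gives `0`, while `S 1 = 1`. -/
theorem ratio_mul_lt {τ δ : ℝ} (hδ : 0 < δ) {q : ℕ}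
    (hb : ∀ i, 1 ≤ i → i ≤ q → 0 < bseq τ δ i) :
    sseq τ δ q / bseq τ δ q * bseq τ δ (q + 1) < sseq τ δ (q + 1) := by
  cases q with
  | zero => simp [bseq, sseq]
  | succ q =>
    have h2 := hb (q + 1) (by omega) le_rfl
    rw [div_mul_eq_mul_div, div_lt_iff₀ h2]
    linarith [cross_pos hδ hb]

/-- Monotonicity of `S n / b n`, the negatives of the intercepts; at `n = 0` the junk value `0 / 0 = 0`
is consistent with it. -/
theorem bseq_ratio_mono {τ δ : ℝ} (hδ : 0 < δ) {q : ℕ}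
    (hb : ∀ i, 1 ≤ i → i ≤ q → 0 < bseq τ δ i) {i : ℕ} (hiq : i ≤ q) :
    sseq τ δ i / bseq τ δ i ≤ sseq τ δ q / bseq τ δ q := by
  induction q, hiq using Nat.le_induction with
  | base => exact le_rfl
  | succ q hq ih =>
    have hb' : ∀ i, 1 ≤ i → i ≤ q → 0 < bseq τ δ i := fun i h1 h2 => hb i h1 (by omega)
    refine (ih hb').trans ?_
    rw [le_div_iff₀ (hb (q + 1) (by omega) le_rfl)]
    exact (ratio_mul_lt hδ hb').le

/-- On `Π_L` the maps `g` and `g_L` agree, so exit times may be computed with `g_L`. -/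
theorem mem_Dset_of_gLmap {τL δL : ℝ} (τR δR : ℝ) {p : ℕ} {x : ℝ × ℝ} (hx : x.1 ≤ 0)
    (h : chiLeq (gLmap τL δL) p x) : x ∈ Dset (gB τL δL τR δR) p := by
  obtain ⟨hp, hpos, hneg⟩ := h
  have key : ∀ i, i ≤ p → (gB τL δL τR δR)^[i] x = (gLmap τL δL)^[i] x := by
    intro i
    induction i with
    | zero => intro _; rfl
    | succ i ih =>
      intro hi
      have hle : ((gLmap τL δL)^[i] x).1 ≤ 0 := by
        rcases Nat.eq_zero_or_pos i with rfl | h0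
        · exact hx
        · exact hneg i h0 hi
      rw [Function.iterate_succ_apply', Function.iterate_succ_apply', ih (by omega), gB,
        if_pos hle, gLmap]
  refine ⟨hx, hp, ?_, fun i h1 h2 => ?_⟩
  · rw [key p le_rfl]; exact hpos
  · rw [key i h2.le]; exact hneg i h1 h2

theorem exists_mem_of_pos {τL δL : ℝ} (τR δR : ℝ) (hδ : 0 < δL) {q : ℕ}
    (hb : ∀ i, 1 ≤ i → i ≤ q + 1 → 0 < bseq τL δL i) :
    (Dset (gB τL δL τR δR) (q + 1) ∩ PhiL).Nonempty := by
  have hb' : ∀ i, 1 ≤ i → i ≤ q → 0 < bseq τL δL i := fun i h1 h2 => hb i h1 (by omega)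
  have hlt := ratio_mul_lt hδ hb'
  obtain ⟨ε, hε, hε'⟩ := exists_pos_mul_lt (sub_pos.2 hlt) (bseq τL δL (q + 2))
  have hT : 0 ≤ sseq τL δL q / bseq τL δL q := by
    rcases Nat.eq_zero_or_pos q with rfl | h0
    · simp [bseq]
    · exact div_nonneg (sseq_nonneg hb') (hb' q h0 le_rfl).le
  -- `-S q / b q` is the intercept of `g_L^{-q}(Σ)` on `Σ` (and is `0` when `q = 0`).
  refine ⟨(-ε, -(sseq τL δL q / bseq τL δL q)), mem_Dset_of_gLmap τR δR (by simpa using hε.le)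
    ⟨by omega, ?_, fun i h1 h2 => ?_⟩, by simpa [PhiL] using And.intro hε hT⟩
  · rw [iterate_gLmap_fst]
    simp only
    linarith
  · rw [iterate_gLmap_fst]
    have h3 := bseq_ratio_mono hδ hb' (by omega : i ≤ q)
    rw [div_le_iff₀ (hb i h1 (by omega))] at h3
    have h4 := mul_pos (hb (i + 1) (by omega) (by omega)) hε
    simp only
    linarith

theorem iterate_pos_of_nonpos {τ δ : ℝ} (hδ : 0 < δ) {p : ℕ} (hp : 1 ≤ p)
    (hb : ∀ i, 1 ≤ i → i ≤ p → 0 < bseq τ δ i) (hb1 : bseq τ δ (p + 1) ≤ 0) {x : ℝ × ℝ}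
    (hx : x.1 < 0) (hx1 : ((gLmap τ δ)^[1] x).1 ≤ 0) : 0 < ((gLmap τ δ)^[p + 1] x).1 := by
  rw [Function.iterate_succ_apply, iterate_gLmap_fst]
  have h1 := mul_nonneg_of_nonpos_of_nonpos hb1 hx1
  have h2 := mul_pos (hb p hp le_rfl) (mul_pos hδ (neg_pos.2 hx))
  have h3 := sseq_nonneg hb
  simp only [Function.iterate_one, gLmap] at h1 ⊢
  linarith

/-- The exit time `p* + 1` is attained in `Φ_L`. -/
theorem exists_mem_last {τL δL : ℝ} (τR δR : ℝ) (hδ : 0 < δL) {p : ℕ} (hp : 1 ≤ p)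
    (hb : ∀ i, 1 ≤ i → i ≤ p → 0 < bseq τL δL i) (hb1 : bseq τL δL (p + 1) ≤ 0) :
    (Dset (gB τL δL τR δR) (p + 1) ∩ PhiL).Nonempty := by
  have hbp := hb p hp le_rfl
  have hM : 0 ≤ -bseq τL δL (p + 1) / bseq τL δL p := div_nonneg (by linarith) hbp.le
  have hT := div_nonneg (sseq_nonneg hb) hbp.le
  -- The second coordinate is chosen so that the `p`-th iterate lies exactly on `Σ`.
  set x : ℝ × ℝ :=
    (-1, -(sseq τL δL p / bseq τL δL p + -bseq τL δL (p + 1) / bseq τL δL p)) with hxdef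
  have hle : ∀ i, 1 ≤ i → i < p + 1 → ((gLmap τL δL)^[i] x).1 ≤ 0 := by
    intro i h1 h2
    rw [iterate_gLmap_fst]
    rcases Nat.lt_or_eq_of_le (Nat.lt_succ_iff.1 h2) with h | rfl
    · have h3 := bseq_ratio_mono hδ hb h.le
      rw [div_le_iff₀ (hb i h1 h.le)] at h3
      have h4 := hb (i + 1) (by omega) h
      have h5 := mul_nonneg hM (hb i h1 h.le).le
      simp only [hxdef]
      linarith
    · simp only [hxdef]
      apply le_of_eq
      field_simp
      ring
  have hx : x.1 < 0 := by simp [hxdef]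
  refine ⟨x, mem_Dset_of_gLmap τR δR hx.le ⟨by omega, ?_, hle⟩, hx, ?_⟩
  · exact iterate_pos_of_nonpos hδ hp hb hb1 hx (hle 1 le_rfl (by omega))
  · simp only [hxdef]
    linarith

theorem mem_preimage_iff (τ δ : ℝ) (p : ℕ) (x : ℝ × ℝ) :
    x ∈ (gLmap τ δ)^[p] ⁻¹' SigmaSet ↔
      bseq τ δ (p + 1) * x.1 + bseq τ δ p * x.2 + sseq τ δ p = 0 := by
  rw [← iterate_gLmap_fst]; rfl

/-- If the non-vertical lines among `g_L^{-p}(Σ)`, `1 ≤ p < N`, all have negative slope, then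
`b 1, …, b N` are positive (so that none of those lines is vertical). -/
theorem bseq_pos_of_slopes {τ δ : ℝ} {N : ℕ}
    (h : ∀ p, 1 ≤ p → p < N → ∀ m c : ℝ,
      (gLmap τ δ)^[p] ⁻¹' SigmaSet = {x : ℝ × ℝ | x.2 = m * x.1 + c} → m < 0) :
    ∀ i, 1 ≤ i → i ≤ N → 0 < bseq τ δ i := by
  intro i hi
  induction i, hi using Nat.le_induction with
  | base => intro _; simp [bseq]
  | succ i hi ih =>
    intro hiN
    have hpos := ih (by omega)
    have hm := h i hi hiN (-bseq τ δ (i + 1) / bseq τ δ i) (-sseq τ δ i / bseq τ δ i) (by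
      ext x
      rw [mem_preimage_iff, Set.mem_ofPred_eq, div_mul_eq_mul_div, ← add_div,
        eq_div_iff hpos.ne']
      constructor <;> intro h <;> linarith)
    rw [div_lt_iff₀ hpos] at hm
    linarith

/-- Suppose `δ_L > 0`.  If `p*` (the smallest `p ≥ 1` such that `g_L^{-p}(Σ)` is a
non-vertical line of slope `m_p ≥ 0`) is finite, then the sets `D_p ∩ Φ_L`, for
`p = 1, …, p*+1`, are all non-empty and cover `Φ_L`; if `p* = ∞` (every non-vertical
`g_L^{-p}(Σ)` has negative slope) then `D_p ∩ Φ_L ≠ ∅` for every `p ≥ 1`. -/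
theorem stmt6 (τL δL τR δR : ℝ) (hδL : 0 < δL) :
    (∀ pstar : ℕ, 1 ≤ pstar →
      (∃ m c : ℝ, 0 ≤ m ∧
        (gLmap τL δL)^[pstar] ⁻¹' SigmaSet = {x : ℝ × ℝ | x.2 = m * x.1 + c}) →
      (∀ p, 1 ≤ p → p < pstar → ∀ m c : ℝ,
        (gLmap τL δL)^[p] ⁻¹' SigmaSet = {x : ℝ × ℝ | x.2 = m * x.1 + c} → m < 0) →
      (∀ p, 1 ≤ p → p ≤ pstar + 1 →
        (Dset (gB τL δL τR δR) p ∩ PhiL).Nonempty) ∧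
      PhiL ⊆ ⋃ p ∈ Finset.Icc 1 (pstar + 1), Dset (gB τL δL τR δR) p) ∧
    ((∀ p, 1 ≤ p → ∀ m c : ℝ,
        (gLmap τL δL)^[p] ⁻¹' SigmaSet = {x : ℝ × ℝ | x.2 = m * x.1 + c} → m < 0) →
      ∀ p, 1 ≤ p → (Dset (gB τL δL τR δR) p ∩ PhiL).Nonempty) := by
  constructor
  · intro p hp ⟨m, c, hm, hset⟩ hneg
    have hb := bseq_pos_of_slopes hneg
    have hb1 : bseq τL δL (p + 1) ≤ 0 := by
      -- Two points of the line determine its slope.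
      have h0 := (mem_preimage_iff τL δL p (0, c)).1 (by rw [hset]; simp)
      have h1 := (mem_preimage_iff τL δL p (1, m + c)).1 (by rw [hset]; simp)
      have h2 := mul_nonneg (hb p hp le_rfl).le hm
      simp only at h0 h1
      linarith
    refine ⟨fun k hk hkp => ?_, fun x hx => ?_⟩
    · obtain ⟨q, rfl⟩ := Nat.exists_eq_add_of_le' hk
      rcases Nat.lt_or_eq_of_le hkp with h | h
      · exact exists_mem_of_pos τR δR hδL fun i h1 h2 => hb i h1 (by omega)
      · obtain rfl : q = p := by omega
        exact exists_mem_last τR δR hδL hp hb hb1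
    · classical
      have hex : ∃ k, 1 ≤ k ∧ k ≤ p + 1 ∧ 0 < ((gLmap τL δL)^[k] x).1 := by
        by_cases h1 : ((gLmap τL δL)^[1] x).1 ≤ 0
        · exact ⟨p + 1, by omega, le_rfl, iterate_pos_of_nonpos hδL hp hb hb1 hx.1 h1⟩
        · exact ⟨1, le_rfl, by omega, not_le.1 h1⟩
      obtain ⟨hk1, hk2, hk3⟩ := Nat.find_spec hex
      simp only [Set.mem_iUnion, Finset.mem_Icc]
      refine ⟨Nat.find hex, ⟨hk1, hk2⟩, mem_Dset_of_gLmap τR δR hx.1.le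
        ⟨hk1, hk3, fun i h1 h2 => ?_⟩⟩
      by_contra h
      exact Nat.find_min hex h2 ⟨h1, by omega, not_le.1 h⟩
  · intro hneg p hp
    obtain ⟨q, rfl⟩ := Nat.exists_eq_add_of_le' hp
    exact exists_mem_of_pos τR δR hδL
      (bseq_pos_of_slopes fun k hk _ => hneg k hk)
end

section
/- Suppose δ_R > τ_R²/4 and (g_R^{−i}(0,0))₂ < 0 for every integer i ≥ 1. Then q* and q** are finite, the sets E_q ∩ Φ_R for q = q*, …, q** are all non-empty, and their union contains Φ_R. -/
/-- The right component `g_R` of the BCNF. -/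
def gRmap (τR δR : ℝ) (x : ℝ × ℝ) : ℝ × ℝ := (τR * x.1 + x.2 + 1, -δR * x.1)

/-- The inverse of `g_R` (valid when `δR ≠ 0`). -/
noncomputable def gRinv (τR δR : ℝ) (x : ℝ × ℝ) : ℝ × ℝ :=
  (-x.2 / δR, x.1 + τR * x.2 / δR - 1)

/-- `χ_R(x) = q`: `q ≥ 1` is the smallest integer with `g^q(x) ∉ Π_R`. -/
def chiReq (g : ℝ × ℝ → ℝ × ℝ) (q : ℕ) (x : ℝ × ℝ) : Prop :=
  1 ≤ q ∧ (g^[q] x).1 < 0 ∧ ∀ i, 1 ≤ i → i < q → 0 ≤ (g^[i] x).1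

/-- `E_q = {x ∈ Π_R : χ_R(x) = q}`. -/
def Eset (g : ℝ × ℝ → ℝ × ℝ) (q : ℕ) : Set (ℝ × ℝ) :=
  {x | 0 ≤ x.1 ∧ chiReq g q x}

/-- The first quadrant `Φ_R`. -/
def PhiR : Set (ℝ × ℝ) := {x | 0 < x.1 ∧ 0 ≤ x.2}

/-- `g_R^{-q}(Σ)` is vertical, or is non-vertical with positive slope. -/
def VertOrPosSlope (τR δR : ℝ) (q : ℕ) : Prop :=
  (∃ k : ℝ, (gRmap τR δR)^[q] ⁻¹' SigmaSet = {x : ℝ × ℝ | x.1 = k}) ∨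
  (∃ n d : ℝ, 0 < n ∧ (gRmap τR δR)^[q] ⁻¹' SigmaSet = {x : ℝ × ℝ | x.2 = n * x.1 + d})

/-- `g_R^{-q}(Σ)` is non-vertical with `x₂`-intercept `d_q ≤ 0`. -/
def NonPosIntercept (τR δR : ℝ) (q : ℕ) : Prop :=
  ∃ n d : ℝ, d ≤ 0 ∧ (gRmap τR δR)^[q] ⁻¹' SigmaSet = {x : ℝ × ℝ | x.2 = n * x.1 + d}

/-- The partial sums `c_n = b_1 + ⋯ + b_n`: the first coordinate of `g_R^n (0, 0)`. -/
def cseq (τ δ : ℝ) : ℕ → ℝ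
  | 0 => 0
  | n + 1 => cseq τ δ n + bseq τ δ (n + 1)

lemma bseq_rec (τ δ : ℝ) (n : ℕ) :
    bseq τ δ (n + 2) = τ * bseq τ δ (n + 1) - δ * bseq τ δ n := rfl

lemma cseq_succ (τ δ : ℝ) (n : ℕ) :
    cseq τ δ (n + 1) = cseq τ δ n + bseq τ δ (n + 1) := rfl

lemma gRmap_iterate_fst (τ δ : ℝ) (n : ℕ) (x : ℝ × ℝ) :
    ((gRmap τ δ)^[n] x).1 = bseq τ δ (n + 1) * x.1 + bseq τ δ n * x.2 + cseq τ δ n := by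
  induction n generalizing x with
  | zero => simp [bseq, cseq]
  | succ n ih =>
    rw [Function.iterate_succ_apply, ih, bseq_rec, cseq_succ]
    simp only [gRmap]
    ring

lemma bseq_invariant (τ δ : ℝ) (n : ℕ) :
    bseq τ δ (n + 1) ^ 2 - τ * bseq τ δ n * bseq τ δ (n + 1) + δ * bseq τ δ n ^ 2 = δ ^ n := by
  induction n with
  | zero => simp [bseq]
  | succ n ih =>
    rw [pow_succ δ n, ← ih, bseq_rec]
    ring

/-- Closed form of the partial sums: `1 / (1 - τ + δ)` is the first coordinate of the fixed point
of `g_R`. -/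
lemma cseq_closed (τ δ : ℝ) (n : ℕ) :
    (1 - τ + δ) * cseq τ δ n = 1 - bseq τ δ (n + 1) + δ * bseq τ δ n := by
  induction n with
  | zero => simp [bseq, cseq]
  | succ n ih =>
    rw [cseq_succ, mul_add, ih, bseq_rec]
    ring

lemma gRinv_iterate (τ δ : ℝ) (hδ : 0 < δ) (n : ℕ) :
    (1 - τ + δ) * δ ^ n * ((gRinv τ δ)^[n] ((0, 0) : ℝ × ℝ)).1
        = δ ^ n - δ * bseq τ δ n + τ * bseq τ δ n - bseq τ δ (n + 1) ∧
    (1 - τ + δ) * δ ^ n * ((gRinv τ δ)^[n] ((0, 0) : ℝ × ℝ)).2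
        = δ * (bseq τ δ (n + 1) - bseq τ δ n - δ ^ n) := by
  induction n with
  | zero => simp [bseq]
  | succ n ih =>
    rw [Function.iterate_succ_apply']
    obtain ⟨h1, h2⟩ := ih
    generalize (gRinv τ δ)^[n] ((0, 0) : ℝ × ℝ) = p at h1 h2
    simp only [gRinv, bseq_rec]
    constructor
    · have : (1 - τ + δ) * δ ^ (n + 1) * (-p.2 / δ) = -((1 - τ + δ) * δ ^ n * p.2) := by
        rw [pow_succ]
        field_simp
      rw [this, h2]
      ring
    · have : (1 - τ + δ) * δ ^ (n + 1) * (p.1 + τ * p.2 / δ - 1)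
          = δ * ((1 - τ + δ) * δ ^ n * p.1) + τ * ((1 - τ + δ) * δ ^ n * p.2)
            - (1 - τ + δ) * δ ^ (n + 1) := by
        rw [pow_succ]
        field_simp
      rw [this, h1, h2]
      ring

/-! ### The backward orbit of the origin -/

lemma focus_pos {τ δ : ℝ} (h : τ ^ 2 / 4 < δ) : 0 < δ ∧ 0 < 1 - τ + δ := by
  constructor
  · nlinarith [sq_nonneg τ]
  · nlinarith [sq_nonneg (τ - 2)]

/-- The backward-orbit hypothesis, in terms of `b`. -/
lemma bseq_diff_lt {τ δ : ℝ} (h : τ ^ 2 / 4 < δ) {n : ℕ}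
    (hb : ((gRinv τ δ)^[n] ((0, 0) : ℝ × ℝ)).2 < 0) :
    bseq τ δ (n + 1) - bseq τ δ n < δ ^ n := by
  obtain ⟨hδ, hP⟩ := focus_pos h
  have h2 := (gRinv_iterate τ δ hδ n).2
  have h3 : (1 - τ + δ) * δ ^ n * ((gRinv τ δ)^[n] ((0, 0) : ℝ × ℝ)).2 < 0 :=
    mul_neg_of_pos_of_neg (by positivity) hb
  rw [h2] at h3
  have := (pos_iff_neg_of_mul_neg h3).1 hδ
  linarith

/-- The backward-orbit hypothesis as a comparison of the intercepts `-c_n / b_n` of consecutive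
preimages of `Σ`. -/
lemma cross_neg {τ δ : ℝ} (h : τ ^ 2 / 4 < δ) {n : ℕ}
    (hb : ((gRinv τ δ)^[n] ((0, 0) : ℝ × ℝ)).2 < 0) :
    cseq τ δ n * bseq τ δ (n + 1) - cseq τ δ (n + 1) * bseq τ δ n < 0 := by
  obtain ⟨hδ, hP⟩ := focus_pos h
  have h1 := bseq_diff_lt h hb
  have h2 := bseq_invariant τ δ n
  have h3 := cseq_closed τ δ n
  have h4 := cseq_closed τ δ (n + 1)
  rw [bseq_rec] at h4
  have key : (1 - τ + δ) * (cseq τ δ n * bseq τ δ (n + 1) - cseq τ δ (n + 1) * bseq τ δ n)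
      = bseq τ δ (n + 1) - bseq τ δ n - δ ^ n := by
    linear_combination bseq τ δ (n + 1) * h3 - bseq τ δ n * h4 - h2
  have : (1 - τ + δ) * (cseq τ δ n * bseq τ δ (n + 1) - cseq τ δ (n + 1) * bseq τ δ n) < 0 := by
    rw [key]; linarith
  exact (pos_iff_neg_of_mul_neg this).1 hP

/-! ### One revolution of the rotation -/

lemma bseq_trig (r θ : ℝ) (n : ℕ) :
    bseq (2 * r * Real.cos θ) (r ^ 2) n * (r * Real.sin θ) = r ^ n * Real.sin (n * θ) ∧
    bseq (2 * r * Real.cos θ) (r ^ 2) (n + 1) * (r * Real.sin θ)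
      = r ^ (n + 1) * Real.sin ((n + 1 : ℕ) * θ) := by
  induction n with
  | zero => simp [bseq]
  | succ n ih =>
    refine ⟨ih.2, ?_⟩
    have e : Real.sin ((n + 1 + 1 : ℕ) * θ)
        = 2 * Real.cos θ * Real.sin ((n + 1 : ℕ) * θ) - Real.sin (n * θ) := by
      have e1 : ((n + 1 + 1 : ℕ) : ℝ) * θ = ((n + 1 : ℕ) : ℝ) * θ + θ := by push_cast; ring
      have e2 : (n : ℝ) * θ = ((n + 1 : ℕ) : ℝ) * θ - θ := by push_cast; ring
      rw [e1, e2, Real.sin_add, Real.sin_sub]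
      ring
    rw [bseq_rec, e]
    linear_combination (2 * r * Real.cos θ) * ih.2 - r ^ 2 * ih.1

/-- The sign pattern of `b` over its first revolution; `N` is the last index with `Nθ ≤ π` and `M` the
last one with `Mθ < 2π`. -/
lemma bseq_signs {τ δ : ℝ} (h : τ ^ 2 / 4 < δ) :
    ∃ N M : ℕ, 1 ≤ N ∧ N < M ∧ (∀ j, 1 ≤ j → j < N → 0 < bseq τ δ j) ∧ 0 ≤ bseq τ δ N ∧
      (∀ j, N < j → j ≤ M → bseq τ δ j < 0) ∧ 0 ≤ bseq τ δ (M + 1) := by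
  obtain ⟨hδ, -⟩ := focus_pos h
  obtain ⟨r, hr, rfl⟩ : ∃ r : ℝ, 0 < r ∧ r ^ 2 = δ :=
    ⟨√δ, Real.sqrt_pos.2 hδ, Real.sq_sqrt hδ.le⟩
  have habs : |τ| < 2 * r := abs_lt_of_sq_lt_sq (by nlinarith) (by positivity)
  rw [abs_lt] at habs
  obtain ⟨θ, hθ0, hθπ, rfl⟩ : ∃ θ : ℝ, 0 < θ ∧ θ < Real.pi ∧ 2 * r * Real.cos θ = τ := by
    have l1 : -1 < τ / (2 * r) := by rw [lt_div_iff₀ (by positivity)]; linarith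
    have l2 : τ / (2 * r) < 1 := by rw [div_lt_one (by positivity)]; linarith
    refine ⟨Real.arccos (τ / (2 * r)), Real.arccos_pos.2 l2, ?_, ?_⟩
    · refine lt_of_le_of_ne (Real.arccos_le_pi _) fun e => ?_
      rw [Real.arccos_eq_pi] at e
      linarith
    · rw [Real.cos_arccos l1.le l2.le]
      field_simp
  have hs : 0 < r * Real.sin θ := mul_pos hr (Real.sin_pos_of_pos_of_lt_pi hθ0 hθπ)
  have form : ∀ j : ℕ, bseq (2 * r * Real.cos θ) (r ^ 2) j
      = r ^ j * Real.sin (j * θ) / (r * Real.sin θ) := fun j => by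
    rw [eq_div_iff hs.ne', (bseq_trig r θ j).1]
  have pos : ∀ j : ℕ, 0 < Real.sin (j * θ) → 0 < bseq (2 * r * Real.cos θ) (r ^ 2) j :=
    fun j hj => by rw [form]; positivity
  have nonneg : ∀ j : ℕ, 0 ≤ Real.sin (j * θ) → 0 ≤ bseq (2 * r * Real.cos θ) (r ^ 2) j :=
    fun j hj => by rw [form]; positivity
  have neg : ∀ j : ℕ, Real.sin (j * θ) < 0 → bseq (2 * r * Real.cos θ) (r ^ 2) j < 0 :=
    fun j hj => by
      rw [form]
      exact div_neg_of_neg_of_pos (mul_neg_of_pos_of_neg (by positivity) hj) hs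
  have hN1 : (⌊Real.pi / θ⌋₊ : ℝ) * θ ≤ Real.pi := by
    rw [← le_div_iff₀ hθ0]; exact Nat.floor_le (by positivity)
  have hN2 : Real.pi < (⌊Real.pi / θ⌋₊ + 1 : ℝ) * θ := by
    rw [← div_lt_iff₀ hθ0]; exact Nat.lt_floor_add_one _
  have hN0 : 1 ≤ ⌊Real.pi / θ⌋₊ := by
    rw [Nat.one_le_floor_iff, one_le_div hθ0]; exact hθπ.le
  obtain ⟨M, hM⟩ : ∃ M : ℕ, ⌈2 * Real.pi / θ⌉₊ = M + 1 :=
    Nat.exists_eq_succ_of_ne_zero (Nat.ceil_pos.2 (by positivity)).ne'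
  have hM1 : 2 * Real.pi ≤ (M + 1 : ℝ) * θ := by
    rw [← div_le_iff₀ hθ0]
    calc _ ≤ (⌈2 * Real.pi / θ⌉₊ : ℝ) := Nat.le_ceil _
      _ = _ := by rw [hM]; push_cast; rfl
  have hM2 : (M : ℝ) * θ < 2 * Real.pi := by
    rw [← lt_div_iff₀ hθ0]
    exact Nat.lt_ceil.1 (by omega)
  generalize ⌊Real.pi / θ⌋₊ = N at *
  refine ⟨N, M, hN0, ?_, ?_, ?_, ?_, ?_⟩
  · have : (N : ℝ) * θ < M * θ := by linarith
    exact_mod_cast lt_of_mul_lt_mul_right this hθ0.le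
  · intro j h1 h2
    have h1' : (1 : ℝ) ≤ j := by exact_mod_cast h1
    have h2' : (j : ℝ) + 1 ≤ N := by exact_mod_cast h2
    exact pos j (Real.sin_pos_of_pos_of_lt_pi (by positivity) (by nlinarith))
  · exact nonneg N (Real.sin_nonneg_of_nonneg_of_le_pi (by positivity) hN1)
  · intro j h1 h2
    have h1' : (N : ℝ) + 1 ≤ j := by exact_mod_cast h1
    have h2' : (j : ℝ) ≤ M := by exact_mod_cast h2
    apply neg
    rw [← Real.sin_sub_two_pi]
    exact Real.sin_neg_of_neg_of_neg_pi_lt (by nlinarith) (by nlinarith)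
  · apply nonneg
    rw [← Real.sin_sub_two_pi]
    push_cast
    exact Real.sin_nonneg_of_nonneg_of_le_pi (by linarith) (by linarith)

/-- At the end of the negative block of `b` the partial sum is nonpositive. With `y = b_{M+1}` and
`z = -b_M`, the backward hypothesis reads `y + z < δ^M`, which forces `δ > 1`; then
`(y + δ z)² ≥ y² + τ y z + δ z² = δ^M ≥ 1`. -/
lemma cseq_last_nonpos {τ δ : ℝ} (h : τ ^ 2 / 4 < δ) {M : ℕ}
    (hb : ((gRinv τ δ)^[M] ((0, 0) : ℝ × ℝ)).2 < 0)
    (hM : bseq τ δ M < 0) (hM1 : 0 ≤ bseq τ δ (M + 1)) : cseq τ δ M ≤ 0 := by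
  obtain ⟨hδ, hP⟩ := focus_pos h
  have h1 := bseq_diff_lt h hb
  have h2 := bseq_invariant τ δ M
  have h3 := cseq_closed τ δ M
  generalize bseq τ δ (M + 1) = y at *
  obtain ⟨z, hz⟩ : ∃ z, bseq τ δ M = -z := ⟨_, (neg_neg _).symm⟩
  rw [hz] at hM h1 h2 h3
  have hz0 : 0 < z := by linarith
  have hyz : 0 ≤ y * z := by positivity
  have hδ1 : 1 < δ := by
    by_contra! hle
    have hτ : τ ≤ 2 := by nlinarith
    have hp1 : δ ^ M ≤ 1 := pow_le_one₀ hδ.le hle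
    have hp0 : 0 < δ ^ M := by positivity
    have k1 : δ ^ M ≤ (y + z) ^ 2 := by
      rw [← h2]
      nlinarith [mul_nonneg hyz (sub_nonneg.2 hτ), mul_nonneg (sq_nonneg z) (sub_nonneg.2 hle)]
    nlinarith
  have hτ : τ ≤ 2 * δ := by nlinarith
  have hp1 : 1 ≤ δ ^ M := one_le_pow₀ hδ1.le
  have k1 : δ ^ M ≤ (y + δ * z) ^ 2 := by
    rw [← h2]
    nlinarith [mul_nonneg hyz (sub_nonneg.2 hτ),
      mul_nonneg (mul_nonneg hδ.le (sq_nonneg z)) (sub_nonneg.2 hδ1.le)]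
  have k2 : 1 ≤ y + δ * z := by
    have : 0 ≤ y + δ * z := by positivity
    nlinarith
  have k3 : (1 - τ + δ) * cseq τ δ M ≤ 0 := by rw [h3]; linarith
  exact nonpos_of_mul_nonpos_right k3 hP

/-- No point with `x₂ ≥ 0` can have both `L_{m} ≥ 0` and `L_{m+1} ≥ 0` when `b_{m+1} < 0 ≤ b_{m+2}`:
eliminating `x₁` from the two inequalities leaves `δ^m x₂ < 0`. -/
lemma not_stay {τ δ : ℝ} (h : τ ^ 2 / 4 < δ) {m : ℕ}
    (hb : ((gRinv τ δ)^[m + 1] ((0, 0) : ℝ × ℝ)).2 < 0)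
    (hM : bseq τ δ (m + 1) < 0) (hM1 : 0 ≤ bseq τ δ (m + 2)) {x : ℝ × ℝ} (hx : 0 ≤ x.2)
    (h1 : 0 ≤ ((gRmap τ δ)^[m] x).1) (h2 : 0 ≤ ((gRmap τ δ)^[m + 1] x).1) : False := by
  obtain ⟨hδ, -⟩ := focus_pos h
  have hc := cross_neg h hb
  have hi := bseq_invariant τ δ m
  have hr := bseq_rec τ δ m
  rw [gRmap_iterate_fst] at h1 h2
  rw [cseq_succ τ δ (m + 1), cseq_succ] at hc
  rw [cseq_succ] at h2
  have e1 := mul_nonneg hM1 h1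
  have e2 := mul_nonneg (neg_nonneg.2 hM.le) h2
  have e3 : 0 ≤ δ ^ m * x.2 := by positivity
  have e4 : δ ^ m = bseq τ δ (m + 1) ^ 2 - bseq τ δ m * bseq τ δ (m + 2) := by
    rw [← hi, hr]; ring
  rw [e4] at e3
  simp only [add_assoc, Nat.reduceAdd] at *
  linarith

/-! ### The sets `E_q` and the preimages of `Σ` -/

lemma gB_eq_gRmap (τL δL τR δR : ℝ) {x : ℝ × ℝ} (hx : 0 ≤ x.1) :
    gB τL δL τR δR x = gRmap τR δR x := by
  unfold gB gRmap
  split_ifs with h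
  · have : x.1 = 0 := le_antisymm h hx
    simp [this]
  · rfl

lemma gB_iterate (τL δL τR δR : ℝ) {x : ℝ × ℝ} {q : ℕ}
    (h : ∀ i < q, 0 ≤ ((gRmap τR δR)^[i] x).1) :
    (gB τL δL τR δR)^[q] x = (gRmap τR δR)^[q] x := by
  induction q with
  | zero => rfl
  | succ q ih =>
    rw [Function.iterate_succ_apply', Function.iterate_succ_apply',
      ih fun i hi => h i (by omega), gB_eq_gRmap _ _ _ _ (h q (by omega))]

/-- Membership in `E_q` can be read off the affine iterates. -/
lemma mem_Eset (τL δL τR δR : ℝ) {x : ℝ × ℝ} {q : ℕ} (hq : 1 ≤ q)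
    (h : ∀ i < q, 0 ≤ ((gRmap τR δR)^[i] x).1) (hlt : ((gRmap τR δR)^[q] x).1 < 0) :
    x ∈ Eset (gB τL δL τR δR) q := by
  refine ⟨h 0 (by omega), hq, ?_, fun i _ hi => ?_⟩
  · rwa [gB_iterate _ _ _ _ h]
  · rw [gB_iterate _ _ _ _ fun j hj => h j (by omega)]
    exact h i hi

lemma mem_preimage (τ δ : ℝ) (q : ℕ) (x : ℝ × ℝ) :
    x ∈ (gRmap τ δ)^[q] ⁻¹' SigmaSet ↔
      bseq τ δ (q + 1) * x.1 + bseq τ δ q * x.2 + cseq τ δ q = 0 := by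
  rw [← gRmap_iterate_fst]; rfl

lemma preimage_eq_line (τ δ : ℝ) (q : ℕ) (h : bseq τ δ q ≠ 0) :
    (gRmap τ δ)^[q] ⁻¹' SigmaSet = {x : ℝ × ℝ |
      x.2 = -(bseq τ δ (q + 1) / bseq τ δ q) * x.1 + -(cseq τ δ q / bseq τ δ q)} := by
  ext x
  rw [mem_preimage, Set.mem_ofPred_eq]
  field_simp
  constructor <;> intro h <;> linarith

lemma vertOrPosSlope_of {τ δ : ℝ} {q : ℕ} (h0 : 0 ≤ bseq τ δ q) (h1 : bseq τ δ (q + 1) < 0) :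
    VertOrPosSlope τ δ q := by
  rcases h0.eq_or_lt with h0 | h0
  · refine Or.inl ⟨-(cseq τ δ q / bseq τ δ (q + 1)), ?_⟩
    ext x
    rw [mem_preimage, Set.mem_ofPred_eq, ← h0]
    have := h1.ne
    field_simp
    constructor <;> intro h <;> linarith
  · exact Or.inr ⟨_, _, neg_pos.2 (div_neg_of_neg_of_pos h1 h0), preimage_eq_line τ δ q h0.ne'⟩

lemma not_vertOrPosSlope_of {τ δ : ℝ} {q : ℕ} (h0 : 0 < bseq τ δ q)
    (h1 : 0 ≤ bseq τ δ (q + 1)) : ¬ VertOrPosSlope τ δ q := by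
  rintro (⟨k, hk⟩ | ⟨n, d, hn, hk⟩)
  · have a := (mem_preimage τ δ q (k, 0)).1 (by rw [hk]; rfl)
    have b := (mem_preimage τ δ q (k, 1)).1 (by rw [hk]; rfl)
    simp only at a b
    linarith
  · have a := (mem_preimage τ δ q (0, d)).1 (by rw [hk]; simp)
    have b := (mem_preimage τ δ q (1, n + d)).1 (by rw [hk]; simp)
    simp only at a b
    nlinarith [mul_pos h0 hn]

lemma nonPosIntercept_iff {τ δ : ℝ} {q : ℕ} (h0 : bseq τ δ q < 0) :
    NonPosIntercept τ δ q ↔ cseq τ δ q ≤ 0 := by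
  constructor
  · rintro ⟨n, d, hd, hk⟩
    have a := (mem_preimage τ δ q (0, d)).1 (by rw [hk]; simp)
    simp only at a
    nlinarith [mul_nonneg_of_nonpos_of_nonpos h0.le hd]
  · intro hc
    exact ⟨_, _, neg_nonpos.2 (div_nonneg_of_nonpos hc h0.le), preimage_eq_line τ δ q h0.ne⟩

/-- A point of the nonnegative `x₂`-axis whose iterates have the strict signs required by `E_q` can be pushed
slightly into `Φ_R`. The condition starts at `i = 1`, because `L_0` vanishes on the axis. -/
lemma nonempty_of_axis (τL δL τ δ : ℝ) {q : ℕ} (hq : 1 ≤ q) {t : ℝ} (ht : 0 ≤ t)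
    (hpos : ∀ i, 1 ≤ i → i < q → 0 < bseq τ δ i * t + cseq τ δ i)
    (hneg : bseq τ δ q * t + cseq τ δ q < 0) :
    (Eset (gB τL δL τ δ) q ∩ PhiR).Nonempty := by
  have cont : ∀ i, Filter.Tendsto
      (fun e : ℝ => bseq τ δ (i + 1) * e + bseq τ δ i * t + cseq τ δ i) (nhdsWithin 0 (Set.Ioi 0))
      (nhds (bseq τ δ i * t + cseq τ δ i)) := fun i => by
    have : Continuous (fun e : ℝ => bseq τ δ (i + 1) * e + bseq τ δ i * t + cseq τ δ i) := by
      fun_prop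
    have h := this.tendsto 0
    simp only [mul_zero, zero_add] at h
    exact h.mono_left nhdsWithin_le_nhds
  have e1 : ∀ᶠ e : ℝ in nhdsWithin 0 (Set.Ioi 0), ∀ i ∈ Finset.Ico 1 q,
      0 < bseq τ δ (i + 1) * e + bseq τ δ i * t + cseq τ δ i := by
    rw [Filter.eventually_all_finset]
    intro i hi
    rw [Finset.mem_Ico] at hi
    exact (cont i).eventually_const_lt (hpos i hi.1 hi.2)
  have e2 := (cont q).eventually_lt_const hneg
  obtain ⟨e, ⟨h1, h2⟩, h3⟩ := ((e1.and e2).and self_mem_nhdsWithin).exists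
  have h3 : 0 < e := h3
  refine ⟨(e, t), mem_Eset _ _ _ _ hq (fun i hi => ?_) (by rw [gRmap_iterate_fst]; exact h2), h3, ht⟩
  rcases Nat.eq_zero_or_pos i with rfl | hi0
  · exact h3.le
  · rw [gRmap_iterate_fst]
    exact (h1 i (Finset.mem_Ico.2 ⟨hi0, hi⟩)).le

/-! ### The induced partition of `Φ_R` -/

/-- Suppose `δ_R > τ_R²/4` and `(g_R^{-i}(0,0))₂ < 0` for all `i ≥ 1`.  Then `q*`
(the smallest `q ≥ 1` with `n_q > 0` or `n_q = ∞`) and `q**` (the smallest `q > q*`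
with `d_q ≤ 0`) are finite, the sets `E_q ∩ Φ_R` for `q = q*, …, q**` are all
non-empty, and their union contains `Φ_R`. -/
theorem stmt8 (τL δL τR δR : ℝ) (hfocus : τR ^ 2 / 4 < δR)
    (hback : ∀ i : ℕ, 1 ≤ i → ((gRinv τR δR)^[i] ((0, 0) : ℝ × ℝ)).2 < 0) :
    ∃ qstar qss : ℕ,
      1 ≤ qstar ∧ VertOrPosSlope τR δR qstar ∧
      (∀ q, 1 ≤ q → q < qstar → ¬ VertOrPosSlope τR δR q) ∧
      qstar < qss ∧ NonPosIntercept τR δR qss ∧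
      (∀ q, qstar < q → q < qss → ¬ NonPosIntercept τR δR q) ∧
      (∀ q, qstar ≤ q → q ≤ qss → (Eset (gB τL δL τR δR) q ∩ PhiR).Nonempty) ∧
      PhiR ⊆ ⋃ q ∈ Finset.Icc qstar qss, Eset (gB τL δL τR δR) q := by
  classical
  obtain ⟨hδ, -⟩ := focus_pos hfocus
  obtain ⟨N, M, hN, hNM, hpos, hbN, hneg, hM1⟩ := bseq_signs hfocus
  have hbnn : ∀ j, j ≤ N → 0 ≤ bseq τR δR j := fun j hj => by
    rcases Nat.eq_zero_or_pos j with rfl | h0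
    · exact le_rfl
    · rcases hj.eq_or_lt with rfl | h1
      · exact hbN
      · exact (hpos j h0 h1).le
  have hcpos : ∀ j, 1 ≤ j → j ≤ N → 0 < cseq τR δR j := fun j h1 => by
    induction j, h1 using Nat.le_induction with
    | base => intro _; simp [cseq, bseq]
    | succ j h1 ih => intro h2; rw [cseq_succ]; linarith [ih (by omega), hbnn (j + 1) h2]
  have hcM : cseq τR δR M ≤ 0 :=
    cseq_last_nonpos hfocus (hback M (by omega)) (hneg M hNM le_rfl) hM1
  have hex : ∃ q, N < q ∧ cseq τR δR q ≤ 0 := ⟨M, hNM, hcM⟩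
  obtain ⟨Q, ⟨hNQ, hcQ⟩, hQmin⟩ : ∃ Q, (N < Q ∧ cseq τR δR Q ≤ 0) ∧
      ∀ q, N < q → q < Q → 0 < cseq τR δR q :=
    ⟨Nat.find hex, Nat.find_spec hex, fun q h1 h2 => by
      by_contra! h3
      exact Nat.find_min hex h2 ⟨h1, h3⟩⟩
  have hQM : Q ≤ M := by
    by_contra! h
    linarith [hQmin M hNM h]
  have hLnn : ∀ x ∈ PhiR, ∀ i < N, 0 ≤ ((gRmap τR δR)^[i] x).1 := fun x hx i hi => by
    rw [gRmap_iterate_fst]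
    have hc : 0 ≤ cseq τR δR i := by
      rcases Nat.eq_zero_or_pos i with rfl | h0
      · exact le_rfl
      · exact (hcpos i h0 hi.le).le
    have := mul_nonneg (hbnn (i + 1) hi) hx.1.le
    have := mul_nonneg (hbnn i hi.le) hx.2
    linarith
  refine ⟨N, Q, hN, vertOrPosSlope_of hbN (hneg _ (by omega) (by omega)), ?_, hNQ,
    (nonPosIntercept_iff (hneg Q hNQ hQM)).2 hcQ, ?_, ?_, ?_⟩
  · intro q h1 h2
    exact not_vertOrPosSlope_of (hpos q h1 h2) (hbnn (q + 1) h2)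
  · intro q h1 h2
    rw [nonPosIntercept_iff (hneg q h1 (by omega))]
    exact not_le.2 (hQmin q h1 h2)
  · intro q h1 h2
    rcases h1.eq_or_lt with rfl | h1
    -- Far out on the positive `x₁`-axis, `L_N` is dominated by its negative term `b_{N+1} x₁`.
    · have hb : bseq τR δR (N + 1) < 0 := hneg _ (by omega) (by omega)
      have hc := hcpos N hN le_rfl
      have hx : ((cseq τR δR N + 1) / -bseq τR δR (N + 1), (0 : ℝ)) ∈ PhiR :=
        ⟨div_pos (by linarith) (by linarith), le_rfl⟩
      refine ⟨_, mem_Eset _ _ _ _ hN (hLnn _ hx) ?_, hx⟩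
      rw [gRmap_iterate_fst]
      have : bseq τR δR (N + 1) * ((cseq τR δR N + 1) / -bseq τR δR (N + 1))
          = -(cseq τR δR N + 1) := by
        have := hb.ne
        field_simp
      simp only [this]
      linarith
    · have hbq := hneg q h1 (by omega)
      rcases Nat.lt_or_ge (N + 1) q with h3 | h3
      -- `D i` is the intercept `d_i`.
      · let D : ℕ → ℝ := fun i => cseq τR δR i / -bseq τR δR i
        have hstep : ∀ i, N < i → i < M → D (i + 1) < D i := fun i hi hi' => by
          have a := hneg i hi hi'.le
          have b := hneg (i + 1) (by omega) hi'
          have c := cross_neg hfocus (hback i (by omega))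
          simp only [D]
          rw [div_lt_div_iff₀ (by linarith) (by linarith)]
          linarith
        have hanti : ∀ i k, N < i → i + k ≤ M → D (i + k) ≤ D i := fun i k hi => by
          induction k with
          | zero => intro _; exact le_rfl
          | succ k ih => intro hk; exact (hstep (i + k) (by omega) hk).le.trans (ih (by omega))
        obtain ⟨p, rfl⟩ : ∃ p, q = p + 1 := ⟨q - 1, by omega⟩
        have hDp : 0 < D p :=
          div_pos (hQmin p (by omega) (by omega)) (by linarith [hneg p (by omega) (by omega)])
        obtain ⟨t, ht1, ht2⟩ := exists_between (max_lt hDp (hstep p (by omega) (by omega)))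
        have ht0 : 0 < t := lt_of_le_of_lt (le_max_left _ _) ht1
        have htq : D (p + 1) < t := lt_of_le_of_lt (le_max_right _ _) ht1
        refine nonempty_of_axis _ _ _ _ (by omega) ht0.le (fun i hi hi' => ?_) ?_
        · rcases Nat.lt_or_ge N i with h4 | h4
          · have a := hneg i h4 (by omega)
            have : t < D i := by
              refine ht2.trans_le ?_
              have := hanti i (p - i) h4 (by omega)
              rwa [Nat.add_sub_cancel' (by omega)] at this
            rw [lt_div_iff₀ (by linarith)] at this
            linarith
          · linarith [mul_nonneg (hbnn i h4) ht0.le, hcpos i hi h4]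
        · rw [div_lt_iff₀ (by linarith)] at htq
          linarith
      -- For `q = N + 1` no earlier line bounds the height on the `x₂`-axis from above.
      · obtain rfl : q = N + 1 := by omega
        obtain ⟨t, ht⟩ := exists_gt (max 0 (cseq τR δR (N + 1) / -bseq τR δR (N + 1)))
        have ht0 : 0 < t := lt_of_le_of_lt (le_max_left _ _) ht
        have ht1 := lt_of_le_of_lt (le_max_right _ _) ht
        refine nonempty_of_axis _ _ _ _ (by omega) ht0.le (fun i hi hi' => ?_) ?_
        · linarith [mul_nonneg (hbnn i (by omega)) ht0.le, hcpos i hi (by omega)]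
        · rw [div_lt_iff₀ (by linarith)] at ht1
          linarith
  · intro x hx
    have hexit : ∃ i, i ≤ Q ∧ ((gRmap τR δR)^[i] x).1 < 0 := by
      rcases hQM.eq_or_lt with rfl | hlt
      · by_contra! hall
        obtain ⟨m, rfl⟩ : ∃ m, Q = m + 1 := ⟨Q - 1, by omega⟩
        exact not_stay hfocus (hback _ (by omega)) (hneg _ hNQ le_rfl) hM1 hx.2
          (hall m (by omega)) (hall (m + 1) le_rfl)
      · refine ⟨Q, le_rfl, ?_⟩
        rw [gRmap_iterate_fst]
        have a := mul_neg_of_neg_of_pos (hneg (Q + 1) (by omega) hlt) hx.1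
        have b := mul_nonpos_of_nonpos_of_nonneg (hneg Q hNQ hQM).le hx.2
        linarith
    have hspec := Nat.find_spec hexit
    have hmin : ∀ i < Nat.find hexit, 0 ≤ ((gRmap τR δR)^[i] x).1 := fun i hi => by
      by_contra! h
      exact Nat.find_min hexit hi ⟨by omega, h⟩
    have hge : N ≤ Nat.find hexit := by
      by_contra! h
      exact absurd (hLnn x hx _ h) (not_le.2 hspec.2)
    simp only [Set.mem_iUnion]
    exact ⟨_, Finset.mem_Icc.2 ⟨hge, hspec.1⟩, mem_Eset _ _ _ _ (by omega) hmin hspec.2⟩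
end

section
/- Suppose δ_L > 0, δ_R > τ_R²/4, and (g^{−i}(0,0))₂ < 0 for every integer i ≥ 1. Then g^{−1}(0,0) = (0,−1), g^{−i}(0,0) = g_R^{−i}(0,0) for every i ≥ 1, and for every i ≥ 2 the point g^{−i}(0,0) lies in the open fourth quadrant: (g^{−i}(0,0))₁ > 0 and (g^{−i}(0,0))₂ < 0. -/
/-- On the closed lower half-plane the inverse of the BCNF is the inverse of its right piece. -/
theorem ginv_eq_gRinv {τL δL τR δR : ℝ} (hδR : 0 < δR) {ginv : ℝ × ℝ → ℝ × ℝ}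
    (h1 : Function.LeftInverse ginv (gB τL δL τR δR)) {y : ℝ × ℝ} (hy : y.2 ≤ 0) :
    ginv y = gRinv τR δR y := by
  have key : gB τL δL τR δR (gRinv τR δR y) = y := by
    obtain ⟨a, b⟩ := y
    simp only at hy
    rcases hy.lt_or_eq with hb | rfl
    · have hpos : 0 < -b / δR := div_pos (by linarith) hδR
      simp only [gB, gRinv, not_le.mpr hpos, if_false, Prod.mk.injEq]
      constructor
      · field_simp
        ring
      · field_simp
    -- The preimage lies on the switching line `x₁ = 0`, where `gB` uses its left branch.
    · simp [gB, gRinv]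
  rw [← h1 (gRinv τR δR y), key]

/-- Suppose `δ_L > 0`, `δ_R > τ_R²/4` and `(g^{-i}(0,0))₂ < 0` for every `i ≥ 1`.
Then `g^{-1}(0,0) = (0,-1)`, `g^{-i}(0,0) = g_R^{-i}(0,0)` for every `i ≥ 1`, and for
every `i ≥ 2` the point `g^{-i}(0,0)` lies in the open fourth quadrant. -/
theorem stmt9 (τL δL τR δR : ℝ) (hδL : 0 < δL) (hfocus : τR ^ 2 / 4 < δR)
    (ginv : ℝ × ℝ → ℝ × ℝ)
    (h1 : Function.LeftInverse ginv (gB τL δL τR δR))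
    (h2 : Function.RightInverse ginv (gB τL δL τR δR))
    (hback : ∀ i : ℕ, 1 ≤ i → (ginv^[i] ((0, 0) : ℝ × ℝ)).2 < 0) :
    ginv ((0, 0) : ℝ × ℝ) = (0, -1) ∧
    (∀ i : ℕ, 1 ≤ i → ginv^[i] ((0, 0) : ℝ × ℝ) = (gRinv τR δR)^[i] ((0, 0) : ℝ × ℝ)) ∧
    (∀ i : ℕ, 2 ≤ i →
      0 < (ginv^[i] ((0, 0) : ℝ × ℝ)).1 ∧ (ginv^[i] ((0, 0) : ℝ × ℝ)).2 < 0) := by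
  have hδR : 0 < δR := by nlinarith [sq_nonneg τR]
  have hle : ∀ i : ℕ, (ginv^[i] ((0, 0) : ℝ × ℝ)).2 ≤ 0 := by
    intro i
    rcases Nat.eq_zero_or_pos i with rfl | hi
    · simp
    · exact (hback i hi).le
  refine ⟨?_, fun i _ => ?_, fun i hi => ⟨?_, hback i (by omega)⟩⟩
  · rw [ginv_eq_gRinv (y := (0, 0)) hδR h1 le_rfl]
    simp [gRinv]
  · induction i with
    | zero => rfl
    | succ k ih =>
      rcases Nat.eq_zero_or_pos k with rfl | hk
      · exact ginv_eq_gRinv hδR h1 (hle 0)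
      · rw [Function.iterate_succ_apply', Function.iterate_succ_apply',
          ginv_eq_gRinv hδR h1 (hle k), ih hk]
  · obtain ⟨k, rfl⟩ : ∃ k, i = k + 1 := ⟨i - 1, by omega⟩
    rw [Function.iterate_succ_apply', ginv_eq_gRinv hδR h1 (hle k)]
    exact div_pos (neg_pos.mpr (hback k (by omega))) hδR
end

section
/- Let 𝕄 be a non-empty finite collection of 2×2 real matrices and let C ⊆ ℝ² be a topologically closed cone that is contracting-invariant and expanding for 𝕄 with expansion factor c > 1 (i.e. ‖M v‖ ≥ c‖v‖ for all v ∈ C, M ∈ 𝕄). Then there exists η > 0 such that for every 2×2 real matrix N with ‖N − M‖ < η for some M ∈ 𝕄, and every v ∈ C, one has N v ∈ C and ‖N v‖ ≥ ((c+1)/2)·‖v‖. -/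
/-!
By homogeneity everything reduces to unit vectors of `C`, which form a compact set. Their images
under the finitely many `M ∈ 𝕄` form a compact set `K`; expansion rules out the value `0`, so
`K ⊆ interior C`, and hence some `δ`-thickening of `K` stays inside `interior C`
(`IsCompact.exists_thickening_subset_open`). A matrix within `δ` of some `M` moves each
image `M u` of a unit vector by less than `δ`, hence keeps it in `C`. The expansion bound is the
reverse triangle inequality, since `c - (c - 1) / 2 = (c + 1) / 2`.
-/

/-- Robustness of a contracting-invariant expanding cone: if the closed cone `C` is
contracting-invariant and expanding (with factor `c > 1`, Euclidean norm) for a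
non-empty finite collection `𝕄` of `2×2` real matrices (viewed as linear maps of
Euclidean `ℝ²` with the operator norm), then there is `η > 0` such that every matrix
`N` within distance `η` of some member of `𝕄` maps `C` into `C` and expands every
vector of `C` by the factor `(c+1)/2`. -/
theorem stmt15
    (𝕄 : Set ((EuclideanSpace ℝ (Fin 2)) →L[ℝ] (EuclideanSpace ℝ (Fin 2))))
    (h𝕄fin : 𝕄.Finite) (h𝕄ne : 𝕄.Nonempty)
    (C : Set (EuclideanSpace ℝ (Fin 2)))
    (hCne : C.Nonempty) (hCclosed : IsClosed C)
    (hCcone : ∀ (t : ℝ), ∀ v ∈ C, t • v ∈ C)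
    (hinv : ∀ M ∈ 𝕄, ∀ v ∈ C, M v ∈ interior C ∪ {0})
    (c : ℝ) (hc : 1 < c)
    (hexp : ∀ M ∈ 𝕄, ∀ v ∈ C, c * ‖v‖ ≤ ‖M v‖) :
    ∃ η : ℝ, 0 < η ∧
      ∀ N : (EuclideanSpace ℝ (Fin 2)) →L[ℝ] (EuclideanSpace ℝ (Fin 2)),
        (∃ M ∈ 𝕄, ‖N - M‖ < η) →
        ∀ v ∈ C, N v ∈ C ∧ (c + 1) / 2 * ‖v‖ ≤ ‖N v‖ := by
  have hK : IsCompact (⋃ M ∈ 𝕄, M '' (Metric.sphere 0 1 ∩ C)) :=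
    h𝕄fin.isCompact_biUnion fun M _ =>
      ((isCompact_sphere 0 1).inter_right hCclosed).image M.continuous
  have hKC : (⋃ M ∈ 𝕄, M '' (Metric.sphere 0 1 ∩ C)) ⊆ interior C := by
    refine Set.iUnion₂_subset fun M hM => ?_
    rintro _ ⟨u, ⟨hu, huC⟩, rfl⟩
    refine (hinv M hM u huC).resolve_right fun h0 => ?_
    have h := hexp M hM u huC
    rw [Set.mem_singleton_iff.1 h0, mem_sphere_zero_iff_norm.1 hu, norm_zero] at h
    linarith
  obtain ⟨δ, hδ, hsub⟩ := hK.exists_thickening_subset_open isOpen_interior hKC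
  refine ⟨min δ ((c - 1) / 2), lt_min hδ (by linarith), ?_⟩
  rintro N ⟨M, hM, hNM⟩ v hv
  obtain ⟨hNδ, hNc⟩ := lt_min_iff.1 hNM
  constructor
  · rcases eq_or_ne v 0 with rfl | hv0
    · rwa [map_zero]
    have hn : ‖v‖ ≠ 0 := norm_ne_zero_iff.2 hv0
    have hu : ‖‖v‖⁻¹ • v‖ = 1 := by rw [norm_smul, norm_inv, norm_norm, inv_mul_cancel₀ hn]
    have hNu : N (‖v‖⁻¹ • v) ∈ C := by
      refine interior_subset (hsub (Metric.mem_thickening_iff.2 ⟨M (‖v‖⁻¹ • v), ?_, ?_⟩))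
      · exact Set.mem_biUnion hM
          ⟨_, ⟨mem_sphere_zero_iff_norm.2 hu, hCcone _ v hv⟩, rfl⟩
      · have h := (N - M).le_opNorm (‖v‖⁻¹ • v)
        rw [hu, mul_one, ContinuousLinearMap.sub_apply] at h
        rw [dist_eq_norm]
        exact h.trans_lt hNδ
    have h := hCcone ‖v‖ _ hNu
    rwa [map_smul, smul_inv_smul₀ hn] at h
  · have h1 := hexp M hM v hv
    have h2 := (N - M).le_of_opNorm_le hNc.le v
    rw [ContinuousLinearMap.sub_apply] at h2
    have h3 := norm_sub_norm_le (M v) (N v)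
    rw [norm_sub_rev] at h3
    linarith
end

section
/- Let λ₁, λ₂ < 0, q > 0, θ > 1 and α > 2 be real numbers, set ω = ω_BCB = (q/(1 − θ))·(1/α − 1/2) and c = (α/2 − 1)/(θ − 1), and define P : ℝ² → ℝ² by P(w) = (e^{λ₁}(w₁−1) + e^{λ₁(1−z(w))}, e^{λ₂}(w₂−1) + e^{λ₂(1−z(w))}) where z(w) = (αω/q)·(w₁ − θw₂ + q/(2ω)). Then P is differentiable at w = (1,1), z((1,1)) = 1, αω/q = c, and the Jacobian matrix D P(1,1) has trace e^{λ₁} + e^{λ₂} − c·(λ₁ − θλ₂) and determinant e^{λ₁+λ₂} − c·(λ₁ e^{λ₂} − θλ₂ e^{λ₁}). -/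
/-!
The map `z` is affine with linear part `c (dw₁ - θ dw₂)`, where `c = αω/q`, and the choice of `ω`
makes `z (1, 1) = 1`. Hence the exponentials `exp (λᵢ (1 - z))` equal `1` at `(1, 1)`, and each
coordinate of `P` has differential `exp λᵢ dwᵢ - λᵢ c (dw₁ - θ dw₂)` there
(`hasFDerivAt_branch_coord`). The Jacobian is therefore the diagonal matrix of the `exp λᵢ` plus a
rank-one matrix, so the terms quadratic in `c` cancel in its determinant.
-/

/-- The differential at a point `a` with `z a = 1` of one coordinate of the branch map; `L` is the
coordinate functional and `Z` the differential of `z`. -/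
theorem hasFDerivAt_branch_coord (l : ℝ) (L Z : ℝ × ℝ →L[ℝ] ℝ) (z : ℝ × ℝ → ℝ) (a : ℝ × ℝ)
    (hz : HasFDerivAt z Z a) (hza : z a = 1) :
    HasFDerivAt (fun w => Real.exp l * (L w - 1) + Real.exp (l * (1 - z w)))
      (Real.exp l • L - l • Z) a := by
  have h := ((L.hasFDerivAt (x := a)).sub_const 1).const_mul (Real.exp l)
  have h' := ((hz.const_sub 1).const_mul l).exp
  refine (h.add h').congr_fderiv ?_
  ext <;> simp [hza] <;> ring


/-- The middle branch `P` of the stroboscopic map of the power converter model,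
evaluated at the border-collision parameter `ω = ω_BCB`, is differentiable at the fixed
point `(1,1)`, where `z(1,1) = 1` and `αω/q = c = (α/2 − 1)/(θ − 1)`, and its Jacobian
matrix at `(1,1)` has trace `e^{λ₁} + e^{λ₂} − c(λ₁ − θλ₂)` and determinant
`e^{λ₁+λ₂} − c(λ₁ e^{λ₂} − θλ₂ e^{λ₁})`. -/
theorem stmt19 (lam1 lam2 q θ α : ℝ)
    (hlam1 : lam1 < 0) (hlam2 : lam2 < 0) (hq : 0 < q) (hθ : 1 < θ) (hα : 2 < α)
    (ω c : ℝ)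
    (hω : ω = q / (1 - θ) * (1 / α - 1 / 2))
    (hc : c = (α / 2 - 1) / (θ - 1))
    (z : ℝ × ℝ → ℝ)
    (hz : ∀ w : ℝ × ℝ, z w = α * ω / q * (w.1 - θ * w.2 + q / (2 * ω)))
    (P : ℝ × ℝ → ℝ × ℝ)
    (hP : ∀ w : ℝ × ℝ,
      P w = (Real.exp lam1 * (w.1 - 1) + Real.exp (lam1 * (1 - z w)),
             Real.exp lam2 * (w.2 - 1) + Real.exp (lam2 * (1 - z w)))) :
    DifferentiableAt ℝ P ((1, 1) : ℝ × ℝ) ∧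
    z ((1, 1) : ℝ × ℝ) = 1 ∧
    α * ω / q = c ∧
    ((fderiv ℝ P ((1, 1) : ℝ × ℝ)) ((1, 0) : ℝ × ℝ)).1
        + ((fderiv ℝ P ((1, 1) : ℝ × ℝ)) ((0, 1) : ℝ × ℝ)).2
      = Real.exp lam1 + Real.exp lam2 - c * (lam1 - θ * lam2) ∧
    ((fderiv ℝ P ((1, 1) : ℝ × ℝ)) ((1, 0) : ℝ × ℝ)).1
        * ((fderiv ℝ P ((1, 1) : ℝ × ℝ)) ((0, 1) : ℝ × ℝ)).2
      - ((fderiv ℝ P ((1, 1) : ℝ × ℝ)) ((0, 1) : ℝ × ℝ)).1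
        * ((fderiv ℝ P ((1, 1) : ℝ × ℝ)) ((1, 0) : ℝ × ℝ)).2
      = Real.exp (lam1 + lam2) - c * (lam1 * Real.exp lam2 - θ * lam2 * Real.exp lam1) := by
  have hq0 : q ≠ 0 := hq.ne'
  have hα0 : α ≠ 0 := by linarith
  have hθ0 : θ - 1 ≠ 0 := by linarith
  have hθ1 : 1 - θ ≠ 0 := by linarith
  have hcω : α * ω / q = c := by
    rw [hω, hc, show θ - 1 = -(1 - θ) by ring]
    field_simp
    ring
  -- `α > 2` makes `ω` nonzero, so the quotient `q / (2 * ω)` is a genuine one.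
  have hω0 : ω ≠ 0 := by
    rintro rfl
    have h : 0 < (α / 2 - 1) / (θ - 1) := div_pos (by linarith) (by linarith)
    rw [← hc, ← hcω] at h
    simp at h
  have hz1 : z (1, 1) = 1 := by
    have h1 : α * ω / q * (q / (2 * ω)) = α / 2 := by field_simp
    have h2 : c * (θ - 1) = α / 2 - 1 := by rw [hc]; field_simp
    rw [hz, mul_add, h1, hcω]
    linear_combination -h2
  have hdz : HasFDerivAt z
      (c • (ContinuousLinearMap.fst ℝ ℝ ℝ - θ • ContinuousLinearMap.snd ℝ ℝ ℝ)) (1, 1) := by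
    have h := ((ContinuousLinearMap.fst ℝ ℝ ℝ - θ • ContinuousLinearMap.snd ℝ ℝ ℝ).hasFDerivAt
      (x := ((1, 1) : ℝ × ℝ))).add_const (q / (2 * ω)) |>.const_mul c
    refine h.congr_of_eventuallyEq (Filter.Eventually.of_forall fun w => ?_)
    simp [hz, hcω]
  have hdP := (hasFDerivAt_branch_coord lam1 (ContinuousLinearMap.fst ℝ ℝ ℝ) _ z _ hdz hz1).prodMk
    (hasFDerivAt_branch_coord lam2 (ContinuousLinearMap.snd ℝ ℝ ℝ) _ z _ hdz hz1)
  replace hdP := hdP.congr_of_eventuallyEq (f₁ := P) (Filter.Eventually.of_forall fun w => by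
    simp [hP])
  refine ⟨hdP.differentiableAt, hz1, hcω, ?_, ?_⟩
  · rw [hdP.fderiv]
    simp
    ring
  · rw [hdP.fderiv, Real.exp_add]
    simp
    ring
end
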